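/- arXiv:2511.18580 — 3 statements merged into one kernel-verified Lean document; each statement's English description precedes it below -/
import Mathlib

section
/- Let S, T, U be finite index sets and consider the mixed-integer set P = {(x, y, z) ∈ ℤ^S × ℝ^T × ℝ^U : A x + B y ≤ d, E x + F z ≤ h, ℓ ≤ y ≤ u, y_i ∈ ℤ for all i ∈ T ∩ I, z_i ∈ ℤ for all i ∈ U ∩ I}, where the matrix A and the vector d have integer entries, the matrix B is totally unimodular, and every finite entry of the bound vectors ℓ and u is an integer (entries of ℓ may be −∞ and entries of u may be +∞). Then for every linear objective w, if the minimum of w over P is attained, it is attained at a point (x, y, z) ∈ P in which every component of y is an integer. In other words, the variables indexed by T are implied integral: integrality of the x-variables together with the constraints implies that an optimal solution with integral y-components always exists. -/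
open Matrix

/-!
Fix the integral `x`-part and the `z`-part of a feasible point. What remains is a polyhedron in `y`
with totally unimodular rows and integral right-hand side. Cutting it with the integral box
`⌊y⌋ ≤ · ≤ ⌈y⌉` keeps the rows totally unimodular, preserves all integral bounds on `y`, and makes
the polyhedron compact, so every linear function is minimized at a vertex. A vertex is the unique
solution of a square subsystem of its tight constraints; the determinant of that subsystem is `±1`,
hence by Cramer's rule the vertex is integral (Hoffman–Kruskal).
-/

section Subring

variable {n R : Type*} [Fintype n] [CommRing R] {K : Subring R}

lemma dotProduct_mem_subring {v w : n → R} (hv : ∀ i, v i ∈ K) (hw : ∀ i, w i ∈ K) :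
    v ⬝ᵥ w ∈ K :=
  K.sum_mem fun i _ => K.mul_mem (hv i) (hw i)

lemma det_mem_subring [DecidableEq n] {N : Matrix n n R} (hN : ∀ i j, N i j ∈ K) : N.det ∈ K := by
  rw [det_apply']
  exact K.sum_mem fun σ _ => K.mul_mem (intCast_mem K _) (K.prod_mem fun i _ => hN _ _)

lemma det_mul_mem_subring [DecidableEq n] {N : Matrix n n R} {y : n → R}
    (hN : ∀ i j, N i j ∈ K) (hy : ∀ i, (N *ᵥ y) i ∈ K) (i : n) : N.det * y i ∈ K := by
  have cramer_mulVec : N.cramer (N *ᵥ y) = N.det • y := by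
    rw [cramer_eq_adjugate_mulVec, mulVec_mulVec, adjugate_mul, smul_mulVec, one_mulVec]
  rw [← smul_eq_mul, ← Pi.smul_apply, ← cramer_mulVec, cramer_apply]
  refine det_mem_subring fun j k => ?_
  rw [updateCol_apply]
  split_ifs
  exacts [hy j, hN j k]

end Subring

lemma signType_cast_mem_subring {R : Type*} [Ring R] (K : Subring R) (s : SignType) :
    (s : R) ∈ K := by
  cases s <;> simp [K.one_mem, K.zero_mem]

lemma mem_intCast_range_iff {R : Type*} [Ring R] {a : R} :
    a ∈ (Int.castRingHom R).range ↔ ∃ k : ℤ, a = k := by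
  simp [RingHom.mem_range, eq_comm]

lemma isTotallyUnimodular_of_det {m n R : Type*} [CommRing R] {B : Matrix m n R}
    (hB : ∀ (k : ℕ) (f : Fin k → m) (g : Fin k → n), Function.Injective f →
      Function.Injective g →
      (B.submatrix f g).det = 0 ∨ (B.submatrix f g).det = 1 ∨ (B.submatrix f g).det = -1) :
    B.IsTotallyUnimodular := by
  intro k f g hf hg
  obtain h | h | h := hB k f g hf hg
  exacts [⟨0, by simp [h]⟩, ⟨1, by simp [h]⟩, ⟨-1, by simp [h]⟩]

lemma isTotallyUnimodular_fromRows_box {m n R : Type*} [DecidableEq n] [CommRing R]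
    {B : Matrix m n R} (hB : B.IsTotallyUnimodular) :
    (fromRows B (fromRows (1 : Matrix n n R) (-1 : Matrix n n R))).IsTotallyUnimodular := by
  refine hB.fromRows_unitlike fun _ i => ?_
  rcases i with i | i
  · exact ⟨i, 1, by ext j; simp [one_eq_pi_single]⟩
  · exact ⟨i, -1, by ext j; simp [one_eq_pi_single, Pi.single_neg]⟩

lemma span_row_eq_top_of_mulVec_injective {m n 𝕜 : Type*} [Finite m] [Fintype n] [Field 𝕜]
    {M : Matrix m n 𝕜} (hM : Function.Injective M.mulVec) :
    Submodule.span 𝕜 (Set.range M.row) = ⊤ := by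
  apply Submodule.eq_top_of_finrank_eq
  rw [← rank_eq_finrank_span_row, rank]
  exact LinearMap.finrank_range_of_inj hM

lemma exists_det_submatrix_ne_zero {m n 𝕜 : Type*} [Finite m] [Fintype n] [DecidableEq n]
    [Field 𝕜] {M : Matrix m n 𝕜} (hM : Function.Injective M.mulVec) :
    ∃ f : n → m, (M.submatrix f id).det ≠ 0 := by
  obtain ⟨κ, a, -, hspan, hli⟩ := exists_linearIndependent' 𝕜 M.row
  rw [span_row_eq_top_of_mulVec_injective hM] at hspan
  let e : κ ≃ n := (Module.Basis.mk hli hspan.ge).indexEquiv (Pi.basisFun 𝕜 n)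
  have hrows : LinearIndependent 𝕜 (M.submatrix (a ∘ e.symm) id).row :=
    hli.comp e.symm e.symm.injective
  rw [linearIndependent_rows_iff_isUnit, isUnit_iff_isUnit_det] at hrows
  exact ⟨a ∘ e.symm, hrows.ne_zero⟩

lemma exists_mem_extremePoints_forall_le_of_isCompact {V : Type*} [AddCommGroup V] [Module ℝ V]
    [TopologicalSpace V] [T2Space V] [IsTopologicalAddGroup V] [ContinuousSMul ℝ V]
    [LocallyConvexSpace ℝ V] {s : Set V} (hs : IsCompact s) (hne : s.Nonempty)
    (l : StrongDual ℝ V) : ∃ y ∈ s.extremePoints ℝ, ∀ z ∈ s, l y ≤ l z := by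
  have hexp : IsExposed ℝ s ((-l).toExposed s) := ContinuousLinearMap.toExposed.isExposed
  have hface : ((-l).toExposed s).Nonempty :=
    hs.exists_isMaxOn hne (-l).continuous.continuousOn
  obtain ⟨y, hy⟩ := (hexp.isCompact hs).extremePoints_nonempty hface
  exact ⟨y, hexp.isExtreme.extremePoints_subset_extremePoints hy,
    fun z hz => neg_le_neg_iff.mp (hy.1.2 z hz)⟩

/-- The polyhedron `{y | B y ≤ b}` whose vertices are studied. Finite bounds on the coordinates of
`y` are encoded as further rows of `B`. -/
def polyhedron {m n : Type*} [Fintype n] (B : Matrix m n ℝ) (b : m → ℝ) : Set (n → ℝ) :=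
  {y | B *ᵥ y ≤ b}

namespace polyhedron

variable {m n : Type*} [Fintype n] {B : Matrix m n ℝ} {b : m → ℝ}

protected lemma isClosed : IsClosed (polyhedron B b) :=
  isClosed_le (Continuous.matrix_mulVec continuous_const continuous_id) continuous_const

lemma fromRows_box [DecidableEq n] (lo hi : n → ℝ) :
    polyhedron (fromRows B (fromRows 1 (-1))) (Sum.elim b (Sum.elim hi (-lo))) =
      polyhedron B b ∩ Set.Icc lo hi := by
  ext y
  simp only [polyhedron, fromRows_mulVec, one_mulVec, neg_mulVec, Set.mem_ofPred_eq,
    Set.mem_inter_iff, Set.mem_Icc, Sum.elim_le_elim_iff, neg_le_neg_iff, and_comm (a := y ≤ hi)]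

lemma eventually_add_smul_mem [Finite m] {y v : n → ℝ} (hy : y ∈ polyhedron B b)
    (hv : ∀ i, (B *ᵥ y) i = b i → (B *ᵥ v) i = 0) :
    ∀ᶠ t : ℝ in nhds 0, y + t • v ∈ polyhedron B b := by
  refine Filter.eventually_all.mpr fun i => ?_
  simp only [mulVec_add, mulVec_smul, Pi.add_apply, Pi.smul_apply, smul_eq_mul]
  rcases (hy i).eq_or_lt with htight | hslack
  · simp [hv i htight, htight]
  · have hcont : ContinuousAt (fun t : ℝ => (B *ᵥ y) i + t * (B *ᵥ v) i) 0 := by fun_prop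
    exact (hcont.eventually_lt continuousAt_const (by simpa using hslack)).mono fun _ => le_of_lt

lemma eq_zero_of_mem_extremePoints [Finite m] {y v : n → ℝ}
    (hy : y ∈ (polyhedron B b).extremePoints ℝ)
    (hv : ∀ i, (B *ᵥ y) i = b i → (B *ᵥ v) i = 0) : v = 0 := by
  have hplus := eventually_add_smul_mem hy.1 hv
  have hminus := eventually_add_smul_mem (v := -v) hy.1 fun i hi => by simp [mulVec_neg, hv i hi]
  obtain ⟨t, ⟨hadd, hsub⟩, ht : 0 < t⟩ :=
    (((hplus.and hminus).filter_mono nhdsWithin_le_nhds).and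
      (self_mem_nhdsWithin (s := Set.Ioi 0))).exists
  have hseg : y ∈ openSegment ℝ (y + t • v) (y + t • -v) :=
    ⟨1 / 2, 1 / 2, by norm_num, by norm_num, by norm_num, by module⟩
  have hshift : y + t • v = y := hy.2 hadd hsub hseg
  exact (smul_eq_zero.mp (add_eq_left.mp hshift)).resolve_left ht.ne'

lemma exists_det_submatrix_ne_zero_of_mem_extremePoints [Finite m] [DecidableEq n] {y : n → ℝ}
    (hy : y ∈ (polyhedron B b).extremePoints ℝ) :
    ∃ f : n → m, (∀ i, (B *ᵥ y) (f i) = b (f i)) ∧ (B.submatrix f id).det ≠ 0 := by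
  let tight : {i // (B *ᵥ y) i = b i} → m := Subtype.val
  have hinj : Function.Injective (B.submatrix tight id).mulVec := by
    refine (injective_iff_map_eq_zero (B.submatrix tight id).mulVecLin).mpr fun v hv => ?_
    exact eq_zero_of_mem_extremePoints hy fun i hi => congrFun hv ⟨i, hi⟩
  obtain ⟨f, hf⟩ := exists_det_submatrix_ne_zero hinj
  exact ⟨tight ∘ f, fun i => (f i).2, hf⟩

theorem apply_mem_of_mem_extremePoints [Finite m] {K : Subring ℝ} {y : n → ℝ}
    (hB : B.IsTotallyUnimodular) (hb : ∀ i, b i ∈ K)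
    (hy : y ∈ (polyhedron B b).extremePoints ℝ) (j : n) : y j ∈ K := by
  classical
  obtain ⟨f, htight, hdet⟩ := exists_det_submatrix_ne_zero_of_mem_extremePoints hy
  have hB_mem : ∀ i j, B i j ∈ K := fun i j => by
    obtain ⟨s, hs⟩ := hB.apply i j
    exact hs ▸ signType_cast_mem_subring K s
  have hsolve : (B.submatrix f id).det * y j ∈ K :=
    det_mul_mem_subring (fun _ _ => hB_mem _ _) (fun i => htight i ▸ hb (f i)) j
  obtain ⟨s, hs⟩ := (isTotallyUnimodular_iff_fintype B).mp hB n f id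
  rw [← hs] at hsolve hdet
  cases s with
  | zero => simp at hdet
  | neg => simpa using hsolve
  | pos => simpa using hsolve

theorem exists_integral_rounding [Finite m] (hB : B.IsTotallyUnimodular)
    (hb : ∀ i, b i ∈ (Int.castRingHom ℝ).range) (w : n → ℝ) {y : n → ℝ}
    (hy : y ∈ polyhedron B b) :
    ∃ y' ∈ polyhedron B b, (∀ j, (⌊y j⌋ : ℝ) ≤ y' j) ∧ (∀ j, y' j ≤ ⌈y j⌉) ∧
      w ⬝ᵥ y' ≤ w ⬝ᵥ y ∧ ∀ j, y' j ∈ (Int.castRingHom ℝ).range := by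
  classical
  let lo : n → ℝ := fun j => ⌊y j⌋
  let hi : n → ℝ := fun j => ⌈y j⌉
  have hrhs : ∀ i, Sum.elim b (Sum.elim hi (-lo)) i ∈ (Int.castRingHom ℝ).range := by
    rintro (i | j | j)
    · exact hb i
    · exact ⟨⌈y j⌉, rfl⟩
    · exact ⟨-⌊y j⌋, by simp [lo]⟩
  have hcompact : IsCompact (polyhedron B b ∩ Set.Icc lo hi) :=
    isCompact_Icc.inter_left polyhedron.isClosed
  have hy_mem : y ∈ polyhedron B b ∩ Set.Icc lo hi :=
    ⟨hy, fun j => Int.floor_le (y j), fun j => Int.le_ceil (y j)⟩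
  obtain ⟨y', hext, hmin⟩ := exists_mem_extremePoints_forall_le_of_isCompact hcompact
    ⟨y, hy_mem⟩ (dotProductBilin ℝ ℝ w).toContinuousLinearMap
  refine ⟨y', hext.1.1, hext.1.2.1, hext.1.2.2, hmin y hy_mem, ?_⟩
  exact apply_mem_of_mem_extremePoints (isTotallyUnimodular_fromRows_box hB) hrhs
    (fromRows_box lo hi ▸ hext)

end polyhedron

lemma le_coe_of_floor_le {a : EReal} {s t : ℝ} (ha : a = ⊥ ∨ ∃ k : ℤ, a = ((k : ℝ) : EReal))
    (has : a ≤ s) (hst : (⌊s⌋ : ℝ) ≤ t) : a ≤ t := by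
  obtain rfl | ⟨k, rfl⟩ := ha
  · exact bot_le
  · rw [EReal.coe_le_coe_iff] at has ⊢
    exact (Int.cast_le.mpr (Int.le_floor.mpr has)).trans hst

lemma coe_le_of_le_ceil {a : EReal} {s t : ℝ} (ha : a = ⊤ ∨ ∃ k : ℤ, a = ((k : ℝ) : EReal))
    (hsa : s ≤ a) (hts : t ≤ (⌈s⌉ : ℝ)) : t ≤ a := by
  obtain rfl | ⟨k, rfl⟩ := ha
  · exact le_top
  · rw [EReal.coe_le_coe_iff] at hsa ⊢
    exact hts.trans (Int.cast_le.mpr (Int.ceil_le.mpr hsa))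

section MixedInteger

variable {S T U M₁ M₂ : Type*} [Fintype S] [Fintype T] [Fintype U]

/-- The feasible set of the mixed-integer program, consisting of triples `(x, y, z)`. The sets `TI`
and `UI` are `T ∩ I` and `U ∩ I` in the notation of the informal statement. -/
def mixedIntegerSet (A : Matrix M₁ S ℝ) (B : Matrix M₁ T ℝ) (d : M₁ → ℝ)
    (E : Matrix M₂ S ℝ) (F : Matrix M₂ U ℝ) (h : M₂ → ℝ) (ℓ u : T → EReal)
    (TI : Set T) (UI : Set U) : Set ((S → ℝ) × (T → ℝ) × (U → ℝ)) :=
  {p | (∀ i, ∃ k : ℤ, p.1 i = (k : ℝ)) ∧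
    (∀ m, (A *ᵥ p.1) m + (B *ᵥ p.2.1) m ≤ d m) ∧
    (∀ m, (E *ᵥ p.1) m + (F *ᵥ p.2.2) m ≤ h m) ∧
    (∀ i, ℓ i ≤ ((p.2.1 i : ℝ) : EReal) ∧ ((p.2.1 i : ℝ) : EReal) ≤ u i) ∧
    (∀ i ∈ TI, ∃ k : ℤ, p.2.1 i = (k : ℝ)) ∧
    (∀ i ∈ UI, ∃ k : ℤ, p.2.2 i = (k : ℝ))}

theorem stmt0_general [Finite M₁] {A : Matrix M₁ S ℝ} {B : Matrix M₁ T ℝ} {d : M₁ → ℝ}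
    {E : Matrix M₂ S ℝ} {F : Matrix M₂ U ℝ} {h : M₂ → ℝ} {ℓ u : T → EReal}
    {TI : Set T} {UI : Set U}
    (hA : ∀ i j, ∃ k : ℤ, A i j = (k : ℝ)) (hd : ∀ i, ∃ k : ℤ, d i = (k : ℝ))
    (hB : B.IsTotallyUnimodular)
    (hl : ∀ i, ℓ i = ⊥ ∨ ∃ k : ℤ, ℓ i = ((k : ℝ) : EReal))
    (hu : ∀ i, u i = ⊤ ∨ ∃ k : ℤ, u i = ((k : ℝ) : EReal)) (w : T → ℝ)
    {x : S → ℝ} {y : T → ℝ} {z : U → ℝ}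
    (hp : (x, y, z) ∈ mixedIntegerSet A B d E F h ℓ u TI UI) :
    ∃ y', (x, y', z) ∈ mixedIntegerSet A B d E F h ℓ u TI UI ∧ w ⬝ᵥ y' ≤ w ⬝ᵥ y ∧
      ∀ i, ∃ k : ℤ, y' i = (k : ℝ) := by
  obtain ⟨hx, hAB, hEF, hbounds, -, hz⟩ := hp
  have hrhs : ∀ m, (d - A *ᵥ x) m ∈ (Int.castRingHom ℝ).range := fun m =>
    sub_mem (mem_intCast_range_iff.mpr (hd m)) <| dotProduct_mem_subring
      (fun j => mem_intCast_range_iff.mpr (hA m j)) fun j => mem_intCast_range_iff.mpr (hx j)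
  have hfiber : y ∈ polyhedron B (d - A *ᵥ x) := fun m => le_sub_iff_add_le'.mpr (hAB m)
  obtain ⟨y', hy', hfloor, hceil, hwy, hy_int⟩ :=
    polyhedron.exists_integral_rounding hB hrhs w hfiber
  have hy_int' : ∀ i, ∃ k : ℤ, y' i = (k : ℝ) := fun i => mem_intCast_range_iff.mp (hy_int i)
  refine ⟨y', ⟨hx, fun m => le_sub_iff_add_le'.mp (hy' m), hEF, fun i => ?_,
    fun i _ => hy_int' i, hz⟩, hwy, hy_int'⟩
  exact ⟨le_coe_of_floor_le (hl i) (hbounds i).1 (hfloor i),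
    coe_le_of_le_ceil (hu i) (hbounds i).2 (hceil i)⟩

end MixedInteger

/-- **Implied integrality via totally unimodular submatrices (TU detection).**
Consider the mixed-integer set
`P = {(x, y, z) : A x + B y ≤ d, E x + F z ≤ h, ℓ ≤ y ≤ u, x integral,
      y_i integral for i ∈ TI, z_i integral for i ∈ UI}`
where `A` and `d` are integral, `B` is totally unimodular and every finite entry of
`ℓ` and `u` is an integer.  Then for every linear objective, if the minimum over `P`
is attained, it is attained at a point whose `y`-components are all integral. -/
theorem stmt0
    {S T U M₁ M₂ : Type*} [Fintype S] [Fintype T] [Fintype U] [Fintype M₁] [Fintype M₂]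
    (A : Matrix M₁ S ℝ) (B : Matrix M₁ T ℝ) (d : M₁ → ℝ)
    (E : Matrix M₂ S ℝ) (F : Matrix M₂ U ℝ) (h : M₂ → ℝ)
    (ℓ u : T → EReal)
    (TI : Set T) (UI : Set U)
    -- `A` and `d` have integer entries
    (hA : ∀ i j, ∃ k : ℤ, A i j = (k : ℝ)) (hd : ∀ i, ∃ k : ℤ, d i = (k : ℝ))
    -- `B` is totally unimodular: every square submatrix has determinant 0, 1 or -1
    (hB : ∀ (k : ℕ) (f : Fin k → M₁) (g : Fin k → T), Function.Injective f →
      Function.Injective g →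
      (B.submatrix f g).det = 0 ∨ (B.submatrix f g).det = 1 ∨ (B.submatrix f g).det = -1)
    -- every finite entry of `ℓ` and `u` is an integer
    (hl : ∀ i, ℓ i = ⊥ ∨ ∃ k : ℤ, ℓ i = ((k : ℝ) : EReal))
    (hu : ∀ i, u i = ⊤ ∨ ∃ k : ℤ, u i = ((k : ℝ) : EReal))
    -- the mixed-integer set `P`
    (P : Set ((S → ℝ) × (T → ℝ) × (U → ℝ)))
    (hP : P = {p | (∀ i, ∃ k : ℤ, p.1 i = (k : ℝ)) ∧
      (∀ m, (A *ᵥ p.1) m + (B *ᵥ p.2.1) m ≤ d m) ∧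
      (∀ m, (E *ᵥ p.1) m + (F *ᵥ p.2.2) m ≤ h m) ∧
      (∀ i, ℓ i ≤ ((p.2.1 i : ℝ) : EReal) ∧ ((p.2.1 i : ℝ) : EReal) ≤ u i) ∧
      (∀ i ∈ TI, ∃ k : ℤ, p.2.1 i = (k : ℝ)) ∧
      (∀ i ∈ UI, ∃ k : ℤ, p.2.2 i = (k : ℝ))})
    -- an arbitrary linear objective
    (wS : S → ℝ) (wT : T → ℝ) (wU : U → ℝ)
    (obj : (S → ℝ) × (T → ℝ) × (U → ℝ) → ℝ)
    (hobj : obj = fun p => ∑ i, wS i * p.1 i + ∑ i, wT i * p.2.1 i + ∑ i, wU i * p.2.2 i)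
    -- the minimum over `P` is attained at `p₀`
    (p₀ : (S → ℝ) × (T → ℝ) × (U → ℝ)) (hp₀ : p₀ ∈ P)
    (hmin : ∀ p ∈ P, obj p₀ ≤ obj p) :
    -- then it is attained at a point all of whose `y`-components are integral
    ∃ p ∈ P, obj p = obj p₀ ∧ ∀ i : T, ∃ k : ℤ, p.2.1 i = (k : ℝ) := by
  subst hP hobj
  obtain ⟨_, hmem, hle, hy_int⟩ := stmt0_general hA hd (isTotallyUnimodular_of_det hB) hl hu wT hp₀
  exact ⟨_, hmem, (add_le_add_left (add_le_add_right hle _) _).antisymm (hmin _ hmem), hy_int⟩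
end

section
/- Let G = (V, E) be a finite hypergraph, let x ∈ {0,1}^V and z ∈ {0,1}^E satisfy z_e = ∏_{v ∈ e} x_v for every hyperedge e ∈ E. Let e ∈ E be a center edge, let k ≥ 1, and let f_1, f_2, …, f_k ∈ E be neighbor edges each satisfying f_i ∩ e ≠ ∅, and set R = e \ (f_1 ∪ ⋯ ∪ f_k). Then the k-flower inequality holds: z_e + Σ_{i=1}^{k} (1 − z_{f_i}) + Σ_{v ∈ R} (1 − x_v) ≥ 1. -/
/-!
On the unit cube, `s ↦ 1 - ∏ v ∈ s, x v` is monotone and subadditive under unions: if the nodes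
succeed independently with probabilities `x v`, it is the probability that some node of `s` fails.
The flower inequality is the union bound for the cover of `e` by the neighbors `f i` and the
singletons of the uncovered nodes.
-/

section UnionBound

variable {ι V α : Type*} [CommRing α] [PartialOrder α] [IsOrderedRing α] {x : V → α}

theorem one_sub_prod_union_le [DecidableEq V] (hx0 : ∀ v, 0 ≤ x v) (hx1 : ∀ v, x v ≤ 1)
    (s t : Finset V) :
    1 - ∏ v ∈ s ∪ t, x v ≤ (1 - ∏ v ∈ s, x v) + (1 - ∏ v ∈ t, x v) := by
  have prod_le_one (u : Finset V) : ∏ v ∈ u, x v ≤ 1 :=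
    Finset.prod_le_one (fun v _ ↦ hx0 v) fun v _ ↦ hx1 v
  have prod_mul_prod_le : (∏ v ∈ s, x v) * ∏ v ∈ t, x v ≤ ∏ v ∈ s ∪ t, x v := by
    rw [← Finset.prod_union_inter]
    exact mul_le_of_le_one_right (Finset.prod_nonneg fun v _ ↦ hx0 v) (prod_le_one _)
  have one_sub_mul_one_sub_nonneg : 0 ≤ (1 - ∏ v ∈ s, x v) * (1 - ∏ v ∈ t, x v) :=
    mul_nonneg (sub_nonneg.2 (prod_le_one s)) (sub_nonneg.2 (prod_le_one t))
  linear_combination prod_mul_prod_le + one_sub_mul_one_sub_nonneg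

theorem one_sub_prod_biUnion_le_sum [DecidableEq V] (hx0 : ∀ v, 0 ≤ x v)
    (hx1 : ∀ v, x v ≤ 1) (t : Finset ι) (f : ι → Finset V) :
    1 - ∏ v ∈ t.biUnion f, x v ≤ ∑ i ∈ t, (1 - ∏ v ∈ f i, x v) := by
  rw [← Finset.sup_eq_biUnion]
  exact Finset.apply_sup_le_sum (f := fun s : Finset V ↦ 1 - ∏ v ∈ s, x v) (by simp)
    (one_sub_prod_union_le hx0 hx1 _ _) t

theorem one_sub_prod_le_sum_one_sub (hx0 : ∀ v, 0 ≤ x v) (hx1 : ∀ v, x v ≤ 1) (s : Finset V) :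
    1 - ∏ v ∈ s, x v ≤ ∑ v ∈ s, (1 - x v) := by
  classical
  simpa only [Finset.biUnion_singleton_eq_self, Finset.prod_singleton] using
    one_sub_prod_biUnion_le_sum hx0 hx1 s singleton

theorem stmt1_general [DecidableEq V] (hx0 : ∀ v, 0 ≤ x v) (hx1 : ∀ v, x v ≤ 1)
    (e : Finset V) (t : Finset ι) (f : ι → Finset V) :
    1 ≤ (∏ v ∈ e, x v) + (∑ i ∈ t, (1 - ∏ v ∈ f i, x v)) +
      ∑ v ∈ e \ t.biUnion f, (1 - x v) := by
  have union_bound : 1 - ∏ v ∈ e, x v ≤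
      ∑ i ∈ t, (1 - ∏ v ∈ f i, x v) + ∑ v ∈ e \ t.biUnion f, (1 - x v) :=
    calc 1 - ∏ v ∈ e, x v
        ≤ 1 - ∏ v ∈ t.biUnion f ∪ e \ t.biUnion f, x v :=
          sub_le_sub_left (Finset.prod_anti_set_of_le_one hx0 hx1 le_sup_sdiff) 1
      _ ≤ (1 - ∏ v ∈ t.biUnion f, x v) + (1 - ∏ v ∈ e \ t.biUnion f, x v) :=
          one_sub_prod_union_le hx0 hx1 _ _
      _ ≤ ∑ i ∈ t, (1 - ∏ v ∈ f i, x v) + ∑ v ∈ e \ t.biUnion f, (1 - x v) :=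
          add_le_add (one_sub_prod_biUnion_le_sum hx0 hx1 t f)
            (one_sub_prod_le_sum_one_sub hx0 hx1 _)
  simpa only [add_assoc] using sub_le_iff_le_add'.1 union_bound

end UnionBound

/-- **Validity of k-flower inequalities.**
Let `G = (V, E)` be a finite hypergraph with binary node variables `x : V → {0,1}`
and, for each hyperedge `e`, binary resultant variable `z e = ∏_{v ∈ e} x v`.
For a center edge `e`, neighbor edges `f 1, …, f k` each intersecting `e`, and
`R = e \ (f 1 ∪ ⋯ ∪ f k)`, the `k`-flower inequality
`z e + Σᵢ (1 − z (f i)) + Σ_{v ∈ R} (1 − x v) ≥ 1` holds. -/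
theorem stmt1 {V : Type*} [DecidableEq V] (x : V → ℝ)
    (hx : ∀ v, x v = 0 ∨ x v = 1)
    (z : Finset V → ℝ)
    (hz : ∀ e : Finset V, z e = ∏ v ∈ e, x v)
    (k : ℕ) (hk : 1 ≤ k)
    (e : Finset V) (f : Fin k → Finset V)
    (hf : ∀ i, (f i ∩ e).Nonempty)
    (R : Finset V) (hR : R = e \ Finset.univ.biUnion f) :
    1 ≤ z e + (∑ i, (1 - z (f i))) + ∑ v ∈ R, (1 - x v) := by
  simpa only [hz, hR] using stmt1_general (fun v ↦ by rcases hx v with h | h <;> simp [h])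
    (fun v ↦ by rcases hx v with h | h <;> simp [h]) e Finset.univ f
end

section
/- Let Γ be a finite group of signed permutations of ℝ^n, i.e., each γ ∈ Γ acts by γ(x) = (s^γ_1 x_{π_γ^{-1}(1)}, …, s^γ_n x_{π_γ^{-1}(n)}) for some permutation π_γ of [n] and sign vector s^γ ∈ {−1,1}^n, let F ⊆ ℝ^n satisfy γ(F) = F for all γ ∈ Γ, and let f : ℝ^n → ℝ satisfy f(γ(x)) = f(x) for all x ∈ F and γ ∈ Γ. Fix an index i ∈ [n]. If the minimum of f over F is attained, then it is attained at a point x ∈ F satisfying the SST cuts x_i ≥ γ(x)_i for every γ ∈ Γ. -/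
section SSTCuts

variable {X α β : Type*} {Γ : Set (X → X)} {φ : X → α}

/-- `x` satisfies the SST cuts of the family of maps `Γ`: none of them increases the value of `φ`
at `x`. The cuts `x i ≥ γ x i` with leader `i` in `ℝⁿ` are those for the coordinate
`φ = fun x ↦ x i`. -/
def SatisfiesSSTCuts [LE α] (Γ : Set (X → X)) (φ : X → α) (x : X) : Prop :=
  ∀ γ ∈ Γ, φ (γ x) ≤ φ x

lemma satisfiesSSTCuts_apply_of_isMaxOn [Preorder α] {g : X → X} {x : X}
    (hcomp : ∀ γ ∈ Γ, γ ∘ g ∈ Γ) (hmax : IsMaxOn (fun γ ↦ φ (γ x)) Γ g) :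
    SatisfiesSSTCuts Γ φ (g x) :=
  fun γ hγ ↦ hmax (hcomp γ hγ)

lemma exists_satisfiesSSTCuts_apply [LinearOrder α] {x : X} (hne : Γ.Nonempty)
    (hcomp : ∀ γ₁ ∈ Γ, ∀ γ₂ ∈ Γ, γ₁ ∘ γ₂ ∈ Γ) (hfin : ((fun γ ↦ φ (γ x)) '' Γ).Finite) :
    ∃ g ∈ Γ, SatisfiesSSTCuts Γ φ (g x) := by
  obtain ⟨_, ⟨g, hg, rfl⟩, hmax⟩ := Set.exists_max_image _ id hfin (hne.image _)
  exact ⟨g, hg, satisfiesSSTCuts_apply_of_isMaxOn (fun γ hγ ↦ hcomp γ hγ g hg)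
    fun γ hγ ↦ hmax _ (Set.mem_image_of_mem _ hγ)⟩

theorem stmt4_general [LinearOrder α] (hne : Γ.Nonempty)
    (hcomp : ∀ γ₁ ∈ Γ, ∀ γ₂ ∈ Γ, γ₁ ∘ γ₂ ∈ Γ)
    {F : Set X} (hF : ∀ γ ∈ Γ, Set.MapsTo γ F F)
    {f : X → β} (hf : ∀ x ∈ F, ∀ γ ∈ Γ, f (γ x) = f x)
    {x₀ : X} (hx₀ : x₀ ∈ F) (hfin : ((fun γ ↦ φ (γ x₀)) '' Γ).Finite) :
    ∃ x ∈ F, f x = f x₀ ∧ SatisfiesSSTCuts Γ φ x := by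
  obtain ⟨g, hg, hcuts⟩ := exists_satisfiesSSTCuts_apply hne hcomp hfin
  exact ⟨g x₀, hF g hg hx₀, hf x₀ hx₀ g hg, hcuts⟩

end SSTCuts

/-- **Validity of SST cuts for groups of reflection (signed permutation) symmetries.**
Let `Γ` be a finite group (under composition) of signed permutations of `ℝⁿ` leaving
the feasible set `F` and the objective `f` invariant, and fix an index `i`.  If the
minimum of `f` over `F` is attained, then it is attained at a point `x ∈ F`
satisfying the SST cuts `x i ≥ (γ x) i` for every `γ ∈ Γ`. -/
theorem stmt4 {n : ℕ} (Γ : Set ((Fin n → ℝ) → (Fin n → ℝ)))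
    (hfin : Γ.Finite)
    -- every element of Γ is a signed permutation
    (hsigned : ∀ γ ∈ Γ, ∃ (π : Equiv.Perm (Fin n)) (sg : Fin n → ℝ),
      (∀ j, sg j = 1 ∨ sg j = -1) ∧ ∀ (x : Fin n → ℝ) (j : Fin n),
        γ x j = sg j * x (π.symm j))
    -- Γ is a group under composition
    (hid : id ∈ Γ)
    (hcomp : ∀ γ₁ ∈ Γ, ∀ γ₂ ∈ Γ, γ₁ ∘ γ₂ ∈ Γ)
    (hinv : ∀ γ ∈ Γ, ∃ γ' ∈ Γ, γ ∘ γ' = id ∧ γ' ∘ γ = id)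
    (F : Set (Fin n → ℝ))
    (hF : ∀ γ ∈ Γ, γ '' F = F)
    (f : (Fin n → ℝ) → ℝ)
    (hf : ∀ x ∈ F, ∀ γ ∈ Γ, f (γ x) = f x)
    (i : Fin n)
    -- the minimum of `f` over `F` is attained at `x₀`
    (x₀ : Fin n → ℝ) (hx₀ : x₀ ∈ F) (hmin : ∀ x ∈ F, f x₀ ≤ f x) :
    ∃ x ∈ F, f x = f x₀ ∧ ∀ γ ∈ Γ, γ x i ≤ x i :=
  stmt4_general (φ := fun x : Fin n → ℝ ↦ x i) ⟨id, hid⟩ hcomp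
    (fun γ hγ ↦ Set.mapsTo_iff_image_subset.2 (hF γ hγ).subset) hf hx₀ (hfin.image _)
end
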